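/- Let q be a prime power, k ≤ n, ρ ∈ [0,1], L ≥ 1, and let p be the probability that the linear code {xG : x ∈ F_q^k} (as a multiset) generated by a uniformly random matrix G ∈ F_q^{k×n} is (ρ, L)-list decodable. Then the probability that a uniformly random k-dimensional linear subspace of F_q^n is (ρ, L)-list decodable is at least p − P[rank(G) < k], where G is uniform in F_q^{k×n}. -/

import Mathlib

/-!
A matrix `G` of rank `k` encodes injectively, so its multiset code is its row space counted without
multiplicity, and one is list decodable exactly when the other is. Every `k`-dimensional subspace
is the row space of equally many such matrices, one for each of its ordered bases, so conditioning
`G` on having rank `k` makes its row space a uniformly random `k`-dimensional subspace. It remains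
to observe that `P(A) - P(B) ≤ P(A ∣ Bᶜ)` for any two events.
-/

open Finset
open scoped BigOperators Classical

noncomputable section

/-- The relative Hamming distance between two words of length `n`. -/
def relDist {n : ℕ} {α : Type*} [DecidableEq α] (x y : Fin n → α) : ℝ :=
  (hammingDist x y : ℝ) / n

lemma card_div_sub_card_div_le_card_sdiff_div_card_compl {α 𝕜 : Type*} [Fintype α]
    [DecidableEq α] [Field 𝕜] [LinearOrder 𝕜] [IsStrictOrderedRing 𝕜] (s t : Finset α) :
    (#s : 𝕜) / Fintype.card α - #t / Fintype.card α ≤ #(s \ t) / #tᶜ := by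
  have hsub : s \ t ⊆ tᶜ := fun a ha => mem_compl.2 (mem_sdiff.1 ha).2
  calc (#s : 𝕜) / Fintype.card α - #t / Fintype.card α
      = (#s - #t) / Fintype.card α := (sub_div _ _ _).symm
    _ ≤ #(s \ t) / Fintype.card α := by
        gcongr
        rw [sub_le_iff_le_add]
        exact_mod_cast Nat.sub_le_iff_le_add.1 (le_card_sdiff t s)
    _ ≤ #(s \ t) / #tᶜ := by
        obtain hempty | hnonempty := tᶜ.eq_empty_or_nonempty
        · simp [subset_empty.1 (hempty ▸ hsub)]
        · have : (0 : 𝕜) < #tᶜ := by exact_mod_cast hnonempty.card_pos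
          gcongr
          exact card_le_univ _

section Bases

open Module Submodule

/-- Linearly independent families spanning `W` are the ordered bases of `W`. The nested subtype
presents them as the fibre over `W` of the span map on linearly independent families. -/
def linearIndependentSpanEquivBasis {ι R M : Type*} [Ring R] [AddCommGroup M] [Module R M]
    (W : Submodule R M) :
    {v : {v : ι → M // LinearIndependent R v} // span R (Set.range v.1) = W} ≃ Basis ι R W where
  toFun v := (Basis.span v.1.2).map (LinearEquiv.ofEq _ _ v.2)
  invFun b := ⟨⟨W.subtype ∘ b, b.linearIndependent.map' W.subtype W.ker_subtype⟩, by
    rw [Set.range_comp, span_image, b.span_eq, Submodule.map_top, range_subtype]⟩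
  left_inv v := by
    ext i
    simp
  right_inv b := Basis.eq_of_apply_eq fun i => by
    ext
    rw [Basis.map_apply, LinearEquiv.coe_ofEq_apply, Basis.coe_span_apply]
    rfl

/-- Transport of ordered bases along a linear equivalence, which shows that their number depends
only on the dimension. -/
def basisEquivOfLinearEquiv {ι R M M' : Type*} [Semiring R] [AddCommMonoid M] [Module R M]
    [AddCommMonoid M'] [Module R M'] (e : M ≃ₗ[R] M') : Basis ι R M ≃ Basis ι R M' where
  toFun b := b.map e
  invFun b := b.map e.symm
  left_inv b := Basis.eq_of_apply_eq fun i => by simp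
  right_inv b := Basis.eq_of_apply_eq fun i => by simp

variable {ι K V : Type*} [Fintype ι] [DivisionRing K] [AddCommGroup V] [Module K V]

lemma card_linearIndependent_and_span [FiniteDimensional K V] (P : Submodule K V → Prop) :
    Nat.card {v : ι → V // LinearIndependent K v ∧ P (span K (Set.range v))} =
      Nat.card {W : Submodule K V // finrank K W = Fintype.card ι ∧ P W} *
        Nat.card (Basis ι K (ι → K)) := by
  have hspan (v : {v : ι → V // LinearIndependent K v}) :
      P (span K (Set.range v.1)) ↔
        finrank K (span K (Set.range v.1)) = Fintype.card ι ∧ P (span K (Set.range v.1)) :=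
    (and_iff_right (finrank_span_eq_card v.2)).symm
  let basisEquiv (W : {W : Submodule K V // finrank K W = Fintype.card ι ∧ P W}) :
      Basis ι K W.1 ≃ Basis ι K (ι → K) :=
    basisEquivOfLinearEquiv
      (LinearEquiv.ofFinrankEq W.1 (ι → K) (by rw [W.2.1, finrank_fintype_fun_eq_card]))
  rw [← Nat.card_prod]
  exact Nat.card_congr <|
    (Equiv.subtypeSubtypeEquivSubtypeInter _ _).symm.trans <|
    (Equiv.sigmaSubtypeFiberEquivSubtype _ hspan).symm.trans <|
    Equiv.sigmaEquivProdOfEquiv fun W =>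
      (linearIndependentSpanEquivBasis W.1).trans (basisEquiv W)

lemma card_basis_fun_pos {ι K : Type*} [Finite ι] [Semiring K] [Finite K] :
    0 < Nat.card (Basis ι K (ι → K)) :=
  have : Finite (Basis ι K (ι → K)) := DFunLike.finite _
  have : Nonempty (Basis ι K (ι → K)) := ⟨Pi.basisFun K ι⟩
  Nat.card_pos

end Bases

section RowSpace

open Module Submodule

variable {m n K : Type*} [Fintype m] [Field K]

lemma card_filter_linearIndependent_row_and_span [Finite n] [Fintype (Matrix m n K)]
    (P : Submodule K (n → K) → Prop)
    [DecidablePred fun G : Matrix m n K =>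
      LinearIndependent K G.row ∧ P (span K (Set.range G.row))] :
    #{G : Matrix m n K | LinearIndependent K G.row ∧ P (span K (Set.range G.row))} =
      Nat.card {V : Submodule K (n → K) // finrank K V = Fintype.card m ∧ P V} *
        Nat.card (Basis m K (m → K)) := by
  rw [← card_linearIndependent_and_span, ← Nat.subtype_card _ fun G => mem_filter_univ G]
  rfl

lemma rank_lt_card_iff_not_linearIndependent_row [Fintype n] {G : Matrix m n K} :
    G.rank < Fintype.card m ↔ ¬LinearIndependent K G.row := by
  rw [linearIndependent_iff_card_eq_finrank_span, Set.finrank, ← G.rank_eq_finrank_span_row,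
    G.rank_le_card_height.lt_iff_ne, ne_comm]

theorem card_div_sub_card_rank_lt_div_le {𝕜 : Type*} [Field 𝕜] [LinearOrder 𝕜]
    [IsStrictOrderedRing 𝕜] [Fintype n] [Fintype (Matrix m n K)] [Finite K]
    {A : Finset (Matrix m n K)} {P : Submodule K (n → K) → Prop}
    (hP : ∀ G ∈ A, LinearIndependent K G.row → P (span K (Set.range G.row))) :
    (#A : 𝕜) / Fintype.card (Matrix m n K) -
        #{G : Matrix m n K | G.rank < Fintype.card m} / Fintype.card (Matrix m n K) ≤
      (Nat.card {V : Submodule K (n → K) // finrank K V = Fintype.card m ∧ P V} : 𝕜) /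
        Nat.card {V : Submodule K (n → K) // finrank K V = Fintype.card m} := by
  set D : Finset (Matrix m n K) := {G | G.rank < Fintype.card m}
  have mem_D {G : Matrix m n K} : G ∈ D ↔ ¬LinearIndependent K G.row := by
    rw [mem_filter_univ, rank_lt_card_iff_not_linearIndependent_row]
  have card_compl_D : #Dᶜ =
      Nat.card {V : Submodule K (n → K) // finrank K V = Fintype.card m} *
        Nat.card (Basis m K (m → K)) := by
    have hD : Dᶜ = ({G | LinearIndependent K G.row ∧ True} : Finset (Matrix m n K)) := by
      ext G
      rw [mem_compl, mem_D, not_not, mem_filter_univ, and_true]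
    rw [hD, card_filter_linearIndependent_row_and_span fun _ => True]
    simp only [and_true]
  have card_sdiff_D : #(A \ D) ≤
      Nat.card {V : Submodule K (n → K) // finrank K V = Fintype.card m ∧ P V} *
        Nat.card (Basis m K (m → K)) := by
    rw [← card_filter_linearIndependent_row_and_span]
    refine card_le_card fun G hG => ?_
    rw [mem_sdiff, mem_D, not_not] at hG
    exact (mem_filter_univ G).2 ⟨hG.2, hP G hG.1 hG.2⟩
  have card_basis_ne_zero : (Nat.card (Basis m K (m → K)) : 𝕜) ≠ 0 := by
    exact_mod_cast card_basis_fun_pos.ne'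
  calc (#A : 𝕜) / Fintype.card (Matrix m n K) - #D / Fintype.card (Matrix m n K)
      ≤ #(A \ D) / #Dᶜ := card_div_sub_card_div_le_card_sdiff_div_card_compl _ _
    _ ≤ (Nat.card {V : Submodule K (n → K) // finrank K V = Fintype.card m ∧ P V} *
          Nat.card (Basis m K (m → K)) : ℕ) / #Dᶜ := by gcongr
    _ = _ := by
        rw [card_compl_D, Nat.cast_mul, Nat.cast_mul, mul_div_mul_right _ _ card_basis_ne_zero]

end RowSpace

section ListDecoding

variable {ι α : Type*} [DecidableEq α] {n : ℕ}

/-- `(ρ, L)`-list decodability of a code, given as an indexed family so that a codeword is counted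
once for each index producing it: `fun x => x ᵥ* G` is the multiset code of a generator matrix `G`,
and the coercion from a set to words is that set as a code without repetitions. -/
def IsListDecodable (ρ : ℝ) (L : ℕ) (c : ι → Fin n → α) : Prop :=
  ∀ w, {i | relDist (c i) w ≤ ρ}.encard ≤ L

variable {ρ : ℝ} {L : ℕ}

lemma isListDecodable_iff_card_filter_le [Fintype ι] {c : ι → Fin n → α} :
    IsListDecodable ρ L c ↔ ∀ w, #{i | relDist (c i) w ≤ ρ} ≤ L := by
  refine forall_congr' fun w => ?_
  rw [← coe_filter_univ, Set.encard_coe_eq_coe_finsetCard, Nat.cast_le]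

lemma isListDecodable_coe_iff_natCard_le [Finite α] {C : Set (Fin n → α)} :
    IsListDecodable ρ L ((↑) : C → Fin n → α) ↔
      ∀ w, Nat.card {c // c ∈ C ∧ relDist c w ≤ ρ} ≤ L := by
  refine forall_congr' fun w => ?_
  rw [← Nat.card_congr (Equiv.subtypeSubtypeEquivSubtypeInter _ _), Set.encard,
    ENat.card_eq_coe_natCard, Nat.cast_le]
  rfl

lemma isListDecodable_comp_iff {κ : Type*} {c : ι → Fin n → α} {f : κ → ι}
    (hf : Function.Bijective f) : IsListDecodable ρ L (c ∘ f) ↔ IsListDecodable ρ L c := by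
  refine forall_congr' fun w => ?_
  rw [← Set.encard_preimage_of_bijective hf]
  rfl

lemma isListDecodable_coe_range_iff {c : ι → Fin n → α} (hc : Function.Injective c) :
    IsListDecodable ρ L ((↑) : Set.range c → Fin n → α) ↔ IsListDecodable ρ L c :=
  (isListDecodable_comp_iff (Equiv.ofInjective c hc).bijective).symm

lemma isListDecodable_span_row_iff {m F : Type*} [Fintype m] [Field F] [DecidableEq F]
    {G : Matrix m (Fin n) F} (hG : LinearIndependent F G.row) :
    IsListDecodable ρ L ((↑) : Submodule.span F (Set.range G.row) → Fin n → F) ↔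
      IsListDecodable ρ L fun x => Matrix.vecMul x G := by
  rw [← isListDecodable_coe_range_iff (Matrix.vecMul_injective_iff.2 hG),
    ← range_vecMulLinear]
  rfl

end ListDecoding

/-- let `F` be the field with `q` elements (`q` a prime power), `k ≤ n`, and let
`p` be the probability that the multiset code `{xG : x ∈ F^k}` generated by a uniformly random
`G ∈ F^{k×n}` is `(ρ, L)`-list decodable (counting codewords with multiplicity).  Then the
probability that a uniformly random `k`-dimensional subspace of `F^n` is `(ρ, L)`-list
decodable is at least `p − P[rank(G) < k]`. -/
theorem stmt17 (q k n L : ℕ) (hk : 1 ≤ k) (hkn : k ≤ n)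
    (ρ : ℝ) (hρ0 : 0 ≤ ρ) (hρ1 : ρ ≤ 1)
    (F : Type) [Field F] [Fintype F] [DecidableEq F] (hq : Fintype.card F = q)
    (p : ℝ)
    (hp : p = ((Finset.univ.filter fun G : Matrix (Fin k) (Fin n) F =>
          ∀ w : Fin n → F,
            (Finset.univ.filter fun x : Fin k → F =>
              relDist (Matrix.vecMul x G) w ≤ ρ).card ≤ L).card : ℝ) /
        (Fintype.card (Matrix (Fin k) (Fin n) F) : ℝ)) :
    p - ((Finset.univ.filter fun G : Matrix (Fin k) (Fin n) F => G.rank < k).card : ℝ) /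
          (Fintype.card (Matrix (Fin k) (Fin n) F) : ℝ)
      ≤ (Nat.card {V : Submodule F (Fin n → F) //
            Module.finrank F V = k ∧
            ∀ w : Fin n → F,
              Nat.card {c : Fin n → F // c ∈ V ∧ relDist c w ≤ ρ} ≤ L} : ℝ) /
          (Nat.card {V : Submodule F (Fin n → F) // Module.finrank F V = k} : ℝ) := by
  subst hp
  have hspan (G : Matrix (Fin k) (Fin n) F)
      (hG : ∀ w, #{x | relDist (Matrix.vecMul x G) w ≤ ρ} ≤ L)
      (hrow : LinearIndependent F G.row) :
      ∀ w, Nat.card {c // c ∈ Submodule.span F (Set.range G.row) ∧ relDist c w ≤ ρ} ≤ L :=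
    isListDecodable_coe_iff_natCard_le.1 <|
      (isListDecodable_span_row_iff hrow).2 (isListDecodable_iff_card_filter_le.2 hG)
  simpa only [Fintype.card_fin] using
    card_div_sub_card_rank_lt_div_le (𝕜 := ℝ)
      (P := fun V => ∀ w, Nat.card {c // c ∈ V ∧ relDist c w ≤ ρ} ≤ L)
      fun G hG => hspan G (mem_filter_univ G |>.1 hG)
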